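/- Let σ² > 0 and Py ≥ σ² be real numbers. Then klDiv (gaussianReal 0 σ²) (gaussianReal 0 Py) ≤ klDiv (gaussianReal 0 Py) (gaussianReal 0 σ²); moreover the inequality is strict whenever Py > σ². Equivalently, (1/2)(σ²/Py - 1 + log(Py/σ²)) ≤ (1/2)(Py/σ² - 1 + log(σ²/Py)) for Py ≥ σ², with strict inequality for Py > σ². -/

import Mathlib

open MeasureTheory ProbabilityTheory
open scoped ENNReal NNReal Classical

/-- Kullback–Leibler divergence of `μ` from `ν`: `∫ log (dμ/dν) dμ` when `μ ≪ ν` and the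
log-likelihood ratio is `μ`-integrable, and `∞` otherwise. -/
noncomputable def klDiv {α : Type*} [MeasurableSpace α] (μ ν : Measure α) : ℝ≥0∞ :=
  if μ ≪ ν ∧ Integrable (llr μ ν) μ then ENNReal.ofReal (∫ x, llr μ ν x ∂μ) else ⊤

/-!
For Gaussians `N(m₁, v₁)` and `N(m₂, v₂)`, with `t = log (v₂ / v₁)`, exchanging the two arguments of
the divergence changes it by `sinh t - t + (m₁ - m₂)² (1 / v₁ - 1 / v₂) / 2`. Both terms are
nonnegative when `v₁ ≤ v₂`, and `t < sinh t` for `t > 0` makes the change positive when `v₁ < v₂`.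
-/

section LogLikelihoodRatio

variable {α : Type*} [MeasurableSpace α] {μ ν κ : Measure α}

theorem toReal_rnDeriv_pos [SigmaFinite μ] [μ.HaveLebesgueDecomposition ν] (hμν : μ ≪ ν) :
    ∀ᵐ x ∂μ, 0 < (μ.rnDeriv ν x).toReal := by
  filter_upwards [Measure.rnDeriv_pos hμν, hμν (Measure.rnDeriv_lt_top μ ν)] with x hpos hlt_top
  exact ENNReal.toReal_pos hpos.ne' hlt_top.ne

theorem llr_ae_eq_sub [SigmaFinite μ] [SigmaFinite ν] [SigmaFinite κ]
    (hμν : μ ≪ ν) (hνκ : ν ≪ κ) :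
    llr μ ν =ᵐ[μ] fun x ↦ llr μ κ x - llr ν κ x := by
  filter_upwards [hμν (Measure.rnDeriv_mul_rnDeriv' (μ := μ) hνκ), toReal_rnDeriv_pos hμν,
    hμν (toReal_rnDeriv_pos hνκ)] with x hchain hμν_pos hνκ_pos
  simp only [llr, ← hchain, Pi.mul_apply, ENNReal.toReal_mul]
  rw [Real.log_mul hμν_pos.ne' hνκ_pos.ne', add_sub_cancel_right]

end LogLikelihoodRatio

theorem integral_sub_const_sq {Ω : Type*} [MeasurableSpace Ω] {P : Measure Ω}
    [IsProbabilityMeasure P] {X : Ω → ℝ} (hX : MemLp X 2 P) (c : ℝ) :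
    ∫ ω, (X ω - c) ^ 2 ∂P = Var[X; P] + (P[X] - c) ^ 2 := by
  have hmean : ∫ ω, (X ω - c) ∂P = P[X] - c := by
    simp [integral_sub (hX.integrable one_le_two) (integrable_const c)]
  have hvar := variance_eq_sub (hX.sub (memLp_const c))
  simp only [Pi.pow_apply, Pi.sub_apply, hmean] at hvar
  rw [← variance_sub_const hX.aestronglyMeasurable c]
  exact eq_add_of_sub_eq hvar.symm

section Gaussian

variable {v v₁ v₂ : ℝ≥0}

theorem log_gaussianPDFReal (m : ℝ) (hv : v ≠ 0) (x : ℝ) :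
    Real.log (gaussianPDFReal m v x) =
      -(Real.log (2 * Real.pi * v) / 2) - (x - m) ^ 2 / (2 * v) := by
  have hsqrt : √(2 * Real.pi * v) ≠ 0 := by positivity
  rw [gaussianPDFReal, Real.log_mul (inv_ne_zero hsqrt) (Real.exp_ne_zero _), Real.log_inv,
    Real.log_sqrt (by positivity), Real.log_exp, neg_div, ← sub_eq_add_neg]

theorem llr_gaussianReal_volume (m : ℝ) (v : ℝ≥0) :
    llr (gaussianReal m v) volume =ᵐ[volume] fun x ↦ Real.log (gaussianPDFReal m v x) := by
  filter_upwards [rnDeriv_gaussianReal m v] with x hx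
  rw [llr, hx, toReal_gaussianPDF]

theorem gaussianReal_absolutelyContinuous_gaussianReal (m₁ m₂ : ℝ) (hv₁ : v₁ ≠ 0) (hv₂ : v₂ ≠ 0) :
    gaussianReal m₁ v₁ ≪ gaussianReal m₂ v₂ :=
  (gaussianReal_absolutelyContinuous m₁ hv₁).trans (gaussianReal_absolutelyContinuous' m₂ hv₂)

theorem llr_gaussianReal (m₁ m₂ : ℝ) (hv₁ : v₁ ≠ 0) (hv₂ : v₂ ≠ 0) :
    llr (gaussianReal m₁ v₁) (gaussianReal m₂ v₂) =ᵐ[gaussianReal m₁ v₁] fun x ↦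
      Real.log (v₂ / v₁) / 2 + ((x - m₂) ^ 2 / (2 * v₂) - (x - m₁) ^ 2 / (2 * v₁)) := by
  have hac := gaussianReal_absolutelyContinuous m₁ hv₁
  filter_upwards [llr_ae_eq_sub (gaussianReal_absolutelyContinuous_gaussianReal m₁ m₂ hv₁ hv₂)
      (gaussianReal_absolutelyContinuous m₂ hv₂),
    hac.ae_le (llr_gaussianReal_volume m₁ v₁), hac.ae_le (llr_gaussianReal_volume m₂ v₂)]
    with x hsub h₁ h₂
  have hlog : Real.log (v₂ / v₁) =
      Real.log (2 * Real.pi * v₂) - Real.log (2 * Real.pi * v₁) := by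
    rw [← Real.log_div (by positivity) (by positivity), mul_div_mul_left _ _ (by positivity)]
  rw [hsub, h₁, h₂, log_gaussianPDFReal m₁ hv₁, log_gaussianPDFReal m₂ hv₂, hlog]
  ring

theorem integrable_sub_sq_gaussianReal (m : ℝ) (v : ℝ≥0) (c : ℝ) :
    Integrable (fun x ↦ (x - c) ^ 2) (gaussianReal m v) :=
  ((memLp_id_gaussianReal 2).sub (memLp_const c)).integrable_sq

theorem integral_sub_sq_gaussianReal (m : ℝ) (v : ℝ≥0) (c : ℝ) :
    ∫ x, (x - c) ^ 2 ∂gaussianReal m v = v + (m - c) ^ 2 := by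
  simpa using integral_sub_const_sq (memLp_id_gaussianReal (μ := m) (v := v) 2) c

/-- The closed form of the Kullback–Leibler divergence of `N(m₁, v₁)` from `N(m₂, v₂)`, as a real
number; it represents the divergence for positive variances only. -/
noncomputable def gaussianKL (m₁ v₁ m₂ v₂ : ℝ) : ℝ :=
  (1 / 2) * ((v₁ + (m₁ - m₂) ^ 2) / v₂ - 1 + Real.log (v₂ / v₁))

theorem klDiv_gaussianReal (m₁ m₂ : ℝ) (hv₁ : v₁ ≠ 0) (hv₂ : v₂ ≠ 0) :
    klDiv (gaussianReal m₁ v₁) (gaussianReal m₂ v₂) =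
      ENNReal.ofReal (gaussianKL m₁ v₁ m₂ v₂) := by
  have hllr := llr_gaussianReal m₁ m₂ hv₁ hv₂
  have hint₁ := (integrable_sub_sq_gaussianReal m₁ v₁ m₁).div_const (2 * (v₁ : ℝ))
  have hint₂ := (integrable_sub_sq_gaussianReal m₁ v₁ m₂).div_const (2 * (v₂ : ℝ))
  rw [klDiv, if_pos ⟨gaussianReal_absolutelyContinuous_gaussianReal m₁ m₂ hv₁ hv₂,
    ((integrable_const _).add (hint₂.sub hint₁)).congr hllr.symm⟩]
  congr 1
  calc ∫ x, llr (gaussianReal m₁ v₁) (gaussianReal m₂ v₂) x ∂gaussianReal m₁ v₁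
    _ = Real.log (v₂ / v₁) / 2 + ((v₁ + (m₁ - m₂) ^ 2) / (2 * v₂) -
          (v₁ + (m₁ - m₁) ^ 2) / (2 * v₁)) := by
      rw [integral_congr_ae hllr, integral_add (integrable_const _) (hint₂.sub' hint₁),
        integral_sub hint₂ hint₁, integral_const, probReal_univ, one_smul, integral_div,
        integral_div, integral_sub_sq_gaussianReal, integral_sub_sq_gaussianReal]
    _ = gaussianKL m₁ v₁ m₂ v₂ := by
      rw [gaussianKL]
      field_simp
      ring

end Gaussian

theorem two_mul_log_lt_sub_inv {x : ℝ} (hx : 1 < x) : 2 * Real.log x < x - x⁻¹ := by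
  have hsinh := Real.self_lt_sinh_iff.2 (Real.log_pos hx)
  rw [Real.sinh_log (by positivity)] at hsinh
  linarith

section ClosedForm

variable {v₁ v₂ : ℝ}

theorem gaussianKL_nonneg (m₁ m₂ : ℝ) (hv₁ : 0 < v₁) (hv₂ : 0 < v₂) :
    0 ≤ gaussianKL m₁ v₁ m₂ v₂ := by
  have hlog := Real.one_sub_inv_le_log_of_pos (div_pos hv₂ hv₁)
  have hmean : 0 ≤ (m₁ - m₂) ^ 2 / v₂ := by positivity
  rw [inv_div] at hlog
  rw [gaussianKL, add_div]
  linarith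

theorem gaussianKL_lt_swap (m₁ m₂ : ℝ) (hv₁ : 0 < v₁) (hlt : v₁ < v₂) :
    gaussianKL m₁ v₁ m₂ v₂ < gaussianKL m₂ v₂ m₁ v₁ := by
  have hvar := two_mul_log_lt_sub_inv ((one_lt_div hv₁).2 hlt)
  have hmean : (m₁ - m₂) ^ 2 / v₂ ≤ (m₁ - m₂) ^ 2 / v₁ := by gcongr
  have hlog : Real.log (v₁ / v₂) = -Real.log (v₂ / v₁) := by rw [← Real.log_inv, inv_div]
  rw [inv_div] at hvar
  rw [gaussianKL, gaussianKL, hlog, sub_sq_comm m₂ m₁, add_div, add_div]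
  linarith

theorem gaussianKL_le_swap (m₁ m₂ : ℝ) (hv₁ : 0 < v₁) (hle : v₁ ≤ v₂) :
    gaussianKL m₁ v₁ m₂ v₂ ≤ gaussianKL m₂ v₂ m₁ v₁ := by
  rcases hle.eq_or_lt with rfl | hlt
  · rw [gaussianKL, gaussianKL, sub_sq_comm]
  · exact (gaussianKL_lt_swap m₁ m₂ hv₁ hlt).le

end ClosedForm

theorem stmt_8_general (m₁ m₂ : ℝ) {v₁ v₂ : ℝ≥0} (hv₁ : 0 < v₁) (hle : v₁ ≤ v₂) :
    klDiv (gaussianReal m₁ v₁) (gaussianReal m₂ v₂) ≤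
        klDiv (gaussianReal m₂ v₂) (gaussianReal m₁ v₁) ∧
      (v₁ < v₂ → klDiv (gaussianReal m₁ v₁) (gaussianReal m₂ v₂) <
        klDiv (gaussianReal m₂ v₂) (gaussianReal m₁ v₁)) ∧
      gaussianKL m₁ v₁ m₂ v₂ ≤ gaussianKL m₂ v₂ m₁ v₁ ∧
      (v₁ < v₂ → gaussianKL m₁ v₁ m₂ v₂ < gaussianKL m₂ v₂ m₁ v₁) := by
  have hv₂ : 0 < v₂ := hv₁.trans_le hle
  have hswap_le := gaussianKL_le_swap m₁ m₂ hv₁ hle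
  have hswap_lt (hlt : v₁ < v₂) := gaussianKL_lt_swap m₁ m₂ hv₁ hlt
  rw [klDiv_gaussianReal m₁ m₂ hv₁.ne' hv₂.ne', klDiv_gaussianReal m₂ m₁ hv₂.ne' hv₁.ne']
  exact ⟨ENNReal.ofReal_le_ofReal hswap_le,
    fun hlt ↦ (ENNReal.ofReal_lt_ofReal_iff_of_nonneg (gaussianKL_nonneg m₁ m₂ hv₁ hv₂)).2
      (hswap_lt hlt), hswap_le, hswap_lt⟩

/-- Proposition 2: `D(p₀‖p₁) ≤ D(p₁‖p₀)` for the Gaussians `p₀ = N(0, σ²)`, `p₁ = N(0, Py)`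
with `Py ≥ σ²`, with strict inequality for `Py > σ²`. -/
theorem stmt_8 (σ2 Py : ℝ≥0) (hσ : 0 < σ2) (hle : σ2 ≤ Py) :
    klDiv (gaussianReal 0 σ2) (gaussianReal 0 Py) ≤
        klDiv (gaussianReal 0 Py) (gaussianReal 0 σ2) ∧
      (σ2 < Py → klDiv (gaussianReal 0 σ2) (gaussianReal 0 Py) <
        klDiv (gaussianReal 0 Py) (gaussianReal 0 σ2)) ∧
      (1/2) * ((σ2 : ℝ) / (Py : ℝ) - 1 + Real.log ((Py : ℝ) / (σ2 : ℝ))) ≤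
        (1/2) * ((Py : ℝ) / (σ2 : ℝ) - 1 + Real.log ((σ2 : ℝ) / (Py : ℝ))) ∧
      (σ2 < Py → (1/2) * ((σ2 : ℝ) / (Py : ℝ) - 1 + Real.log ((Py : ℝ) / (σ2 : ℝ))) <
        (1/2) * ((Py : ℝ) / (σ2 : ℝ) - 1 + Real.log ((σ2 : ℝ) / (Py : ℝ)))) := by
  simpa [gaussianKL] using stmt_8_general 0 0 hσ hle
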